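/- arXiv:1301.0156 — 2 statements merged into one kernel-verified Lean document; each statement's English description precedes it below -/
import Mathlib

section
/- Let λ ∈ ℝ and define H_λ(x) = (24 − λx) ln x + [(9λ − 172)x + 12λ − 256] ln(x+1) + 4[(37 − 2λ)x − 3λ + 61] ln(x+2) and G_λ(x) = ln Γ(x) + x + 1/(12(1+x)²) + (λ − 48)/(48(1+x)) + H_λ(x)/24. Then (-1)^{k+1} G_λ^{(k)}(x) > 0 for every integer k ≥ 1 and every x ∈ (0,∞) if and only if λ ≥ 4. -/
/-- `H_λ(x)` as in the paper. -/
noncomputable def H (lam x : ℝ) : ℝ :=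
  (24 - lam * x) * Real.log x +
    ((9 * lam - 172) * x + 12 * lam - 256) * Real.log (x + 1) +
    4 * ((37 - 2 * lam) * x - 3 * lam + 61) * Real.log (x + 2)

/-- `G_λ(x)` as in the paper. -/
noncomputable def G (lam x : ℝ) : ℝ :=
  Real.log (Real.Gamma x) + x + 1 / (12 * (1 + x) ^ 2) +
    (lam - 48) / (48 * (1 + x)) + H lam x / 24

/-!
On `(0, ∞)` the derivative of `G lam` is the digamma function plus an elementary function. It tends
to `0` at infinity, so it is determined by its differences `G'(x) - G'(x + 1)`, whose
derivatives are elementary because `ψ(x + 1) = ψ(x) + 1 / x`; comparing these derivatives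
compares the functions themselves.

If `4 ≤ lam`, the comparison identifies `G'` with the Laplace transform of
`-(1 / (1 - exp (-t)) + φ(t) / t)`, where `φ` is the density whose Laplace transform is the
derivative of the elementary part. The numerator of this density is `lam - 4` times one positive
exponential polynomial plus another, so the density is positive and `G'` is completely monotone.

If `lam < 4`, the derivative of `G'(x) - G'(x + 1)` is a rational function whose numerator has
leading coefficient `80 - 20 * lam > 0`. It is therefore eventually positive, and comparison with
the zero function makes `G'` eventually nonpositive.
-/

open Real Set Filter Topology MeasureTheory ProbabilityTheory

section Monotonicity

theorem pos_of_deriv_eq_of_pos {f f' : ℝ → ℝ} (hf : Differentiable ℝ f) (h0 : f 0 = 0)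
    (hderiv : ∀ t, deriv f t = f' t) (hpos : ∀ t, 0 < t → 0 < f' t) (t : ℝ) (ht : 0 < t) :
    0 < f t := by
  have hmono : StrictMonoOn f (Ici 0) := by
    refine strictMonoOn_of_deriv_pos (convex_Ici 0) hf.continuous.continuousOn fun s hs => ?_
    rw [interior_Ici] at hs
    exact (hderiv s).symm ▸ hpos s hs
  exact h0.symm.trans_lt (hmono self_mem_Ici ht.le ht)

theorem le_of_tendsto_of_le_add {f : ℝ → ℝ} {X l s x : ℝ} (hs : 0 < s)
    (hf : Tendsto f atTop (𝓝 l)) (hle : ∀ y, X < y → f y ≤ f (y + s)) (hx : X < x) :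
    f x ≤ l := by
  have hmono : Monotone fun n : ℕ => f (x + n * s) := by
    refine monotone_nat_of_le_succ fun n => ?_
    have hn : 0 ≤ n * s := by positivity
    have hstep := hle (x + n * s) (by linarith)
    rwa [show x + n * s + s = x + (n + 1 : ℕ) * s by push_cast; ring] at hstep
  have hlim : Tendsto (fun n : ℕ => f (x + n * s)) atTop (𝓝 l) :=
    hf.comp (tendsto_atTop_add_const_left _ x
      (tendsto_natCast_atTop_atTop.atTop_mul_const hs))
  simpa using hmono.ge_of_tendsto hlim 0

theorem le_of_hasDerivAt_sub_shift_le {f g f' g' : ℝ → ℝ} {X l s x : ℝ} (hs : 0 < s)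
    (hf : Tendsto f atTop (𝓝 l)) (hg : Tendsto g atTop (𝓝 l))
    (hf' : ∀ y, X < y → HasDerivAt (fun z => f z - f (z + s)) (f' y) y)
    (hg' : ∀ y, X < y → HasDerivAt (fun z => g z - g (z + s)) (g' y) y)
    (hle : ∀ y, X < y → g' y ≤ f' y) (hx : X < x) : f x ≤ g x := by
  set u : ℝ → ℝ := fun z => (f z - f (z + s)) - (g z - g (z + s))
  have hu (y : ℝ) (hy : X < y) : HasDerivAt u (f' y - g' y) y :=
    (hf' y hy).fun_sub (hg' y hy)
  have hmono : MonotoneOn u (Ioi X) := by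
    refine monotoneOn_of_hasDerivWithinAt_nonneg (convex_Ioi X)
      (fun y hy => (hu y hy).continuousAt.continuousWithinAt) (f' := fun y => f' y - g' y) ?_ ?_ <;>
    rw [interior_Ioi]
    exacts [fun y hy => (hu y hy).hasDerivWithinAt, fun y hy => sub_nonneg.2 (hle y hy)]
  have hshift : Tendsto (fun z => z + s) atTop atTop :=
    tendsto_atTop_add_const_right _ s tendsto_id
  have hlim : Tendsto u atTop (𝓝 0) := by
    simpa using (hf.sub (hf.comp hshift)).sub (hg.sub (hg.comp hshift))
  have hnonpos (y : ℝ) (hy : X < y) : u y ≤ 0 := by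
    refine ge_of_tendsto hlim ?_
    filter_upwards [eventually_ge_atTop y] with z hz using hmono hy (hy.trans_le hz) hz
  have hsub : f x - g x ≤ 0 :=
    le_of_tendsto_of_le_add (f := fun z => f z - g z) hs (by simpa using hf.sub hg)
      (fun y hy => by linarith [hnonpos y hy]) hx
  exact sub_nonpos.1 hsub

end Monotonicity

section ExponentialPolynomials

-- Dividing by `exp t` leaves one coefficient polynomial free of exponentials, and differentiating
-- repeatedly lowers its degree; likewise for `exp_polynomial_degree_three_pos`.
theorem exp_polynomial_degree_two_pos {t : ℝ} (ht : 0 < t) :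
    0 < exp t ^ 2 - (9 - 3 * t + t ^ 2 / 2) * exp t + (8 + 4 * t) := by
  have hderiv₂ : ∀ t, 0 < t → 0 < exp t - 1 + 4 * t * exp (-t) := fun t ht => by
    have := one_lt_exp_iff.2 ht
    have : 0 < 4 * t * exp (-t) := by positivity
    linarith
  have hderiv₁ : ∀ t, 0 < t → 0 < exp t + 3 - t - (4 + 4 * t) * exp (-t) :=
    pos_of_deriv_eq_of_pos (by fun_prop) (by norm_num) (fun t => by
      simp (disch := fun_prop) [deriv_fun_add, deriv_fun_sub, deriv_fun_mul]
      ring) hderiv₂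
  have hdiv : ∀ t, 0 < t → 0 < exp t - (9 - 3 * t + t ^ 2 / 2) + (8 + 4 * t) * exp (-t) :=
    pos_of_deriv_eq_of_pos (by fun_prop) (by norm_num) (fun t => by
      simp (disch := fun_prop) [deriv_fun_add, deriv_fun_sub, deriv_fun_mul]
      ring) hderiv₁
  have hmul := mul_pos (exp_pos t) (hdiv t ht)
  rw [exp_neg] at hmul
  field_simp at hmul
  linarith

theorem exp_neg_polynomial_degree_three_pos {t : ℝ} (ht : 0 < t) :
    0 < 64 * exp t ^ 2 + (-36 + 8 * t - 2 * t ^ 2 - 2 * t ^ 3) * exp t +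
      (36 * t - 28) * exp (-t) := by
  have htaylor : 1 + t + t ^ 2 / 2 + t ^ 3 / 6 ≤ exp t := by
    simpa [Finset.sum_range_succ, Nat.factorial] using sum_le_exp_of_nonneg ht.le 4
  have hcubic : 28 ≤ 64 * exp t + (-36 + 8 * t - 2 * t ^ 2 - 2 * t ^ 3) := by
    nlinarith [pow_pos ht 2, pow_pos ht 3]
  have hexp_neg : exp (-t) < exp t := exp_lt_exp.2 (by linarith)
  have hmul : 28 * exp t ≤ (64 * exp t + (-36 + 8 * t - 2 * t ^ 2 - 2 * t ^ 3)) * exp t := by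
    gcongr
  have hpos : 0 < 36 * t * exp (-t) := by positivity
  linarith

theorem exp_polynomial_degree_three_pos {t : ℝ} (ht : 0 < t) :
    0 < 4 * exp t ^ 3 + (132 - 96 * t + 22 * t ^ 2 - 2 * t ^ 3) * exp t ^ 2 -
      (252 - 36 * t + 22 * t ^ 2 - 2 * t ^ 3) * exp t + (116 + 36 * t) := by
  have hderiv₃ : ∀ t, 0 < t → 0 < 32 * exp t ^ 2 + (-36 + 4 * t ^ 2 - 2 * t ^ 3) * exp t + 12 -
      (8 + 36 * t) * exp (-t) :=
    pos_of_deriv_eq_of_pos (by fun_prop) (by norm_num) (fun t => by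
      simp (disch := fun_prop) [deriv_fun_add, deriv_fun_sub, deriv_fun_mul]
      ring) fun t ht => exp_neg_polynomial_degree_three_pos ht
  have hderiv₂ : ∀ t, 0 < t → 0 < 16 * exp t ^ 2 +
      (-16 - 20 * t + 10 * t ^ 2 - 2 * t ^ 3) * exp t - (44 - 12 * t) + (44 + 36 * t) * exp (-t) :=
    pos_of_deriv_eq_of_pos (by fun_prop) (by norm_num) (fun t => by
      simp (disch := fun_prop) [deriv_fun_add, deriv_fun_sub, deriv_fun_mul]
      ring) hderiv₃
  have hderiv₁ : ∀ t, 0 < t → 0 < 8 * exp t ^ 2 + (36 - 52 * t + 16 * t ^ 2 - 2 * t ^ 3) * exp t +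
      (36 - 44 * t + 6 * t ^ 2) - (80 + 36 * t) * exp (-t) :=
    pos_of_deriv_eq_of_pos (by fun_prop) (by norm_num) (fun t => by
      simp (disch := fun_prop) [deriv_fun_add, deriv_fun_sub, deriv_fun_mul]
      ring) hderiv₂
  have hdiv : ∀ t, 0 < t → 0 < 4 * exp t ^ 2 + (132 - 96 * t + 22 * t ^ 2 - 2 * t ^ 3) * exp t -
      (252 - 36 * t + 22 * t ^ 2 - 2 * t ^ 3) + (116 + 36 * t) * exp (-t) :=
    pos_of_deriv_eq_of_pos (by fun_prop) (by norm_num) (fun t => by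
      simp (disch := fun_prop) [deriv_fun_add, deriv_fun_sub, deriv_fun_mul]
      ring) hderiv₁
  have hmul := mul_pos (exp_pos t) (hdiv t ht)
  rw [exp_neg] at hmul
  field_simp at hmul
  linarith

end ExponentialPolynomials

section Digamma

/-- The real digamma function, the logarithmic derivative of `Real.Gamma`. -/
noncomputable def digamma : ℝ → ℝ := logDeriv Gamma

variable {x : ℝ}

theorem hasDerivAt_log_Gamma (hx : 0 < x) : HasDerivAt (log ∘ Gamma) (digamma x) x := by
  have hdiff : DifferentiableAt ℝ Gamma x := by
    refine differentiableAt_Gamma fun m => ?_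
    have : (0 : ℝ) ≤ m := m.cast_nonneg
    linarith
  exact hdiff.hasDerivAt.log (Gamma_pos_of_pos hx).ne'

theorem log_Gamma_add_one (hx : 0 < x) : log (Gamma (x + 1)) = log x + log (Gamma x) := by
  rw [Gamma_add_one hx.ne', log_mul hx.ne' (Gamma_pos_of_pos hx).ne']

theorem digamma_add_one (hx : 0 < x) : digamma (x + 1) = 1 / x + digamma x := by
  have hshift : HasDerivAt (fun y => log (Gamma (y + 1))) (digamma (x + 1)) x :=
    (hasDerivAt_log_Gamma (by positivity)).comp_add_const x 1
  have hsum : HasDerivAt (fun y => log y + log (Gamma y)) (1 / x + digamma x) x :=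
    one_div x ▸ (hasDerivAt_log hx.ne').fun_add (hasDerivAt_log_Gamma hx)
  refine hshift.unique (hsum.congr_of_eventuallyEq ?_)
  filter_upwards [lt_mem_nhds hx] with y hy using log_Gamma_add_one hy

theorem slope_log_Gamma (hx : 0 < x) : slope (log ∘ Gamma) x (x + 1) = log x := by
  simp [slope_def_field, log_Gamma_add_one hx]

theorem digamma_le_log (hx : 0 < x) : digamma x ≤ log x :=
  slope_log_Gamma hx ▸ convexOn_log_Gamma.le_slope_of_hasDerivAt hx
    (show 0 < x + 1 by positivity) (by linarith) (hasDerivAt_log_Gamma hx)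

theorem log_le_digamma_add_one (hx : 0 < x) : log x ≤ digamma (x + 1) :=
  slope_log_Gamma hx ▸ convexOn_log_Gamma.slope_le_of_hasDerivAt hx
    (show 0 < x + 1 by positivity) (by linarith) (hasDerivAt_log_Gamma (by positivity))

theorem tendsto_digamma_sub_log : Tendsto (fun x => digamma x - log x) atTop (𝓝 0) := by
  have hlower : Tendsto (fun x : ℝ => -x⁻¹) atTop (𝓝 0) := by
    simpa using (tendsto_inv_atTop_zero (𝕜 := ℝ)).neg
  refine tendsto_of_tendsto_of_tendsto_of_le_of_le' hlower tendsto_const_nhds ?_ ?_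
  · filter_upwards [eventually_gt_atTop 0] with x hx
    have := log_le_digamma_add_one hx
    rw [digamma_add_one hx, one_div] at this
    linarith
  · filter_upwards [eventually_gt_atTop 0] with x hx using sub_nonpos.2 (digamma_le_log hx)

end Digamma

section LebesgueLaplace

/-- The Laplace transform `∫₀^∞ φ(t) e^{-xt} dt` of `φ` converges absolutely at `x`, with
value `v`. -/
def HasLaplaceAt (φ : ℝ → ℝ) (v x : ℝ) : Prop :=
  IntegrableOn (fun t => φ t * exp (-(x * t))) (Ioi 0) ∧
    ∫ t in Ioi 0, φ t * exp (-(x * t)) = v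

namespace HasLaplaceAt

variable {φ χ : ℝ → ℝ} {u v x : ℝ}

theorem add (hφ : HasLaplaceAt φ u x) (hχ : HasLaplaceAt χ v x) :
    HasLaplaceAt (fun t => φ t + χ t) (u + v) x := by
  simp only [HasLaplaceAt, add_mul]
  exact ⟨hφ.1.add hχ.1, by rw [integral_add hφ.1 hχ.1, hφ.2, hχ.2]⟩

theorem const_mul (c : ℝ) (hφ : HasLaplaceAt φ u x) :
    HasLaplaceAt (fun t => c * φ t) (c * u) x := by
  simp only [HasLaplaceAt, mul_assoc]
  exact ⟨hφ.1.const_mul c, by rw [integral_const_mul, hφ.2]⟩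

theorem sub (hφ : HasLaplaceAt φ u x) (hχ : HasLaplaceAt χ v x) :
    HasLaplaceAt (fun t => φ t - χ t) (u - v) x := by
  simpa [sub_eq_add_neg] using hφ.add (hχ.const_mul (-1))

theorem mul_exp_neg (hφ : HasLaplaceAt φ u (x + 1)) :
    HasLaplaceAt (fun t => φ t * exp (-t)) u x := by
  have hexp (t : ℝ) : φ t * exp (-t) * exp (-(x * t)) = φ t * exp (-((x + 1) * t)) := by
    rw [mul_assoc, ← exp_add]
    ring_nf
  simpa only [HasLaplaceAt, hexp] using hφ

theorem mul_exp_neg_pow (j : ℕ) (hφ : HasLaplaceAt φ u (x + j)) :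
    HasLaplaceAt (fun t => φ t * exp (-t) ^ j) u x := by
  induction j generalizing x with
  | zero => simpa using hφ
  | succ j ih =>
    simp only [pow_succ, ← mul_assoc]
    refine (ih ?_).mul_exp_neg
    convert hφ using 1
    push_cast
    ring

end HasLaplaceAt

theorem hasLaplaceAt_pow {x : ℝ} (m : ℕ) (hx : 0 < x) :
    HasLaplaceAt (fun t => t ^ m) (m.factorial / x ^ (m + 1)) x := by
  have hval : ∫ t in Ioi 0, t ^ m * exp (-(x * t)) = m.factorial / x ^ (m + 1) := by
    have hGamma := integral_rpow_mul_exp_neg_mul_Ioi (a := m + 1) (by positivity) hx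
    simp only [add_sub_cancel_right, rpow_natCast, Gamma_nat_eq_factorial] at hGamma
    rw [hGamma, ← Nat.cast_add_one, rpow_natCast, one_div, inv_pow]
    field_simp
  refine ⟨?_, hval⟩
  refine Integrable.of_integral_ne_zero ?_
  rw [hval]
  positivity

end LebesgueLaplace

section MeasureLaplace

/-- The Laplace transform `x ↦ ∫ e^{-xt} dμ(t)` of a measure, encoded as a moment-generating
function so that differentiation under the integral sign is available. -/
noncomputable def laplace (μ : Measure ℝ) : ℝ → ℝ := mgf (fun t => -t) μ

section

variable {μ : Measure ℝ} (hexp : ∀ x, 0 < x → Integrable (fun t => exp (x * -t)) μ)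
include hexp

theorem mem_interior_integrableExpSet_neg {x : ℝ} (hx : 0 < x) :
    x ∈ interior (integrableExpSet (fun t => -t) μ) :=
  mem_interior.2 ⟨Ioi 0, hexp, isOpen_Ioi, hx⟩

theorem integrable_neg_pow_mul_exp {x : ℝ} (hx : 0 < x) (n : ℕ) :
    Integrable (fun t => (-t) ^ n * exp (x * -t)) μ :=
  integrable_pow_mul_exp_of_mem_interior_integrableExpSet
    (mem_interior_integrableExpSet_neg hexp hx) n

theorem hasDerivAt_laplace_sub_add_one {x : ℝ} (hx : 0 < x) :
    HasDerivAt (fun y => laplace μ y - laplace μ (y + 1))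
      (∫ t, -t * (1 - exp (-t)) * exp (x * -t) ∂μ) x := by
  have hderiv {y : ℝ} (hy : 0 < y) :
      HasDerivAt (laplace μ) (∫ t, -t * exp (y * -t) ∂μ) y :=
    hasDerivAt_mgf (mem_interior_integrableExpSet_neg hexp hy)
  have hint {y : ℝ} (hy : 0 < y) : Integrable (fun t => -t * exp (y * -t)) μ := by
    simpa using integrable_neg_pow_mul_exp hexp hy 1
  have hx1 : 0 < x + 1 := by positivity
  refine ((hderiv hx).fun_sub ((hderiv hx1).comp_add_const x 1)).congr_deriv ?_
  rw [← integral_sub (hint hx) (hint hx1)]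
  congr with t
  rw [show (x + 1) * -t = x * -t + -t by ring, exp_add]
  ring

variable (hpos : ∀ᵐ t ∂μ, 0 < t)
include hpos

theorem tendsto_laplace_atTop : Tendsto (laplace μ) atTop (𝓝 0) := by
  have hlim : Tendsto (fun x : ℝ => ∫ t, exp (x * -t) ∂μ) atTop (𝓝 (∫ _ : ℝ, (0 : ℝ) ∂μ)) := by
    refine tendsto_integral_filter_of_dominated_convergence (fun t => exp (1 * -t))
      (.of_forall fun x => by fun_prop) ?_ (hexp 1 one_pos) ?_
    · filter_upwards [eventually_ge_atTop 1] with x hx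
      filter_upwards [hpos] with t ht
      rw [norm_of_nonneg (exp_pos _).le]
      exact exp_le_exp.2 (mul_le_mul_of_nonpos_right hx (by linarith))
    · filter_upwards [hpos] with t ht
      exact tendsto_exp_atBot.comp (tendsto_id.atTop_mul_const_of_neg (by linarith))
  rwa [integral_zero] at hlim

theorem neg_one_pow_mul_iteratedDeriv_laplace_pos (hμ : μ ≠ 0) (n : ℕ) {x : ℝ} (hx : 0 < x) :
    0 < (-1) ^ n * iteratedDeriv n (laplace μ) x := by
  have hmoment : ∀ᵐ t ∂μ, 0 < (-1) ^ n * ((-t) ^ n * exp (x * -t)) := by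
    filter_upwards [hpos] with t ht
    rw [← mul_assoc, ← mul_pow, neg_one_mul, neg_neg]
    positivity
  rw [laplace, iteratedDeriv_mgf (mem_interior_integrableExpSet_neg hexp hx), ← integral_const_mul,
    integral_pos_iff_support_of_nonneg_ae (hmoment.mono fun _ ht => ht.le)
      ((integrable_neg_pow_mul_exp hexp hx n).const_mul _)]
  have hsupport : Function.support (fun t => (-1) ^ n * ((-t) ^ n * exp (x * -t))) =ᵐ[μ] univ :=
    eventuallyEq_univ.2 (hmoment.mono fun _ ht => ht.ne')
  rw [measure_congr hsupport]
  exact Measure.measure_univ_pos.2 hμ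

end

/-- The measure with density `w` on the half-line `(0, ∞)`; negative values of `w` count as `0`. -/
noncomputable def halfLineMeasure (w : ℝ → ℝ) : Measure ℝ :=
  (volume.restrict (Ioi 0)).withDensity fun t => ENNReal.ofReal (w t)

theorem ae_halfLineMeasure_pos (w : ℝ → ℝ) : ∀ᵐ t ∂halfLineMeasure w, 0 < t :=
  (withDensity_absolutelyContinuous _ _).ae_le (ae_restrict_mem measurableSet_Ioi)

section

variable {w : ℝ → ℝ} (hw : Measurable w)
include hw

theorem halfLineMeasure_ne_zero (hpos : ∀ t, 0 < t → 0 < w t) : halfLineMeasure w ≠ 0 := by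
  rw [halfLineMeasure, Ne, withDensity_eq_zero_iff hw.ennreal_ofReal.aemeasurable]
  intro hzero
  have : NeBot (ae (volume.restrict (Ioi (0 : ℝ)))) := ae_neBot.2 (by simp)
  obtain ⟨t, ht0, ht⟩ := (hzero.and (ae_restrict_mem measurableSet_Ioi)).exists
  exact (hpos t ht).not_ge (ENNReal.ofReal_eq_zero.1 ht0)

variable (hw0 : ∀ t, 0 < t → 0 ≤ w t) (φ : ℝ → ℝ)
include hw0

theorem integrable_halfLineMeasure_iff :
    Integrable φ (halfLineMeasure w) ↔ IntegrableOn (fun t => φ t * w t) (Ioi 0) := by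
  rw [halfLineMeasure, integrable_withDensity_iff hw.ennreal_ofReal
    (ae_of_all _ fun _ => ENNReal.ofReal_lt_top)]
  refine integrable_congr ?_
  filter_upwards [ae_restrict_mem measurableSet_Ioi] with t ht
  rw [ENNReal.toReal_ofReal (hw0 t ht)]

theorem integral_halfLineMeasure :
    ∫ t, φ t ∂halfLineMeasure w = ∫ t in Ioi 0, φ t * w t := by
  rw [halfLineMeasure, integral_withDensity_eq_integral_toReal_smul hw.ennreal_ofReal
    (ae_of_all _ fun _ => ENNReal.ofReal_lt_top)]
  refine setIntegral_congr_fun measurableSet_Ioi fun t ht => ?_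
  simp only [ENNReal.toReal_ofReal (hw0 t ht), smul_eq_mul, mul_comm]

end

end MeasureLaplace

section Derivative

/-- The elementary part of the derivative of `G lam`, whose other part is `digamma`. -/
noncomputable def elementaryPart (lam x : ℝ) : ℝ :=
  1 / x - 1 / 6 / (x + 1) ^ 3 - (lam - 48) / 48 / (x + 1) ^ 2 + (lam - 28) / 8 / (x + 1) +
    (lam - 13) / 6 / (x + 2) - lam / 24 * log x + (9 * lam - 172) / 24 * log (x + 1) +
    (37 - 2 * lam) / 6 * log (x + 2)

/-- The derivative of `elementaryPart lam` on `(0, ∞)`. -/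
noncomputable def elementaryPartDeriv (lam x : ℝ) : ℝ :=
  -(1 / x ^ 2) + 1 / 2 / (x + 1) ^ 4 + (lam - 48) / 24 / (x + 1) ^ 3 -
    (lam - 28) / 8 / (x + 1) ^ 2 - (lam - 13) / 6 / (x + 2) ^ 2 - lam / 24 / x +
    (9 * lam - 172) / 24 / (x + 1) + (37 - 2 * lam) / 6 / (x + 2)

/-- The derivative of `G lam` on `(0, ∞)`. -/
noncomputable def derivG (lam x : ℝ) : ℝ := digamma x + elementaryPart lam x

theorem hasDerivAt_div_add_pow (c d : ℝ) (n : ℕ) {x : ℝ} (hx : x + d ≠ 0) :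
    HasDerivAt (fun y => c / (y + d) ^ n) (-(n * c) / (x + d) ^ (n + 1)) x := by
  simp only [div_eq_mul_inv c]
  refine ((((hasDerivAt_id' x).add_const d).fun_pow n).fun_inv (pow_ne_zero n hx)
    |>.const_mul c).congr_deriv ?_
  cases n with
  | zero => simp
  | succ n =>
    simp only [Nat.add_sub_cancel]
    field_simp
    ring

theorem hasDerivAt_mul_log_add (c d : ℝ) {x : ℝ} (hx : x + d ≠ 0) :
    HasDerivAt (fun y => c * log (y + d)) (c / (x + d)) x := by
  simpa [div_eq_mul_inv] using (((hasDerivAt_id' x).add_const d).log hx).const_mul c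

variable (lam : ℝ) {x : ℝ}

theorem hasDerivAt_elementaryPart (hx : 0 < x) :
    HasDerivAt (elementaryPart lam) (elementaryPartDeriv lam x) x := by
  have h0 : x + 0 ≠ 0 := by positivity
  have h1 : x + 1 ≠ 0 := by positivity
  have h2 : x + 2 ≠ 0 := by positivity
  have hderiv := ((((((hasDerivAt_div_add_pow 1 0 1 h0).fun_sub
    (hasDerivAt_div_add_pow (1 / 6) 1 3 h1)).fun_sub
    (hasDerivAt_div_add_pow ((lam - 48) / 48) 1 2 h1)).fun_add
    (hasDerivAt_div_add_pow ((lam - 28) / 8) 1 1 h1)).fun_add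
    (hasDerivAt_div_add_pow ((lam - 13) / 6) 2 1 h2)).fun_sub
    (hasDerivAt_mul_log_add (lam / 24) 0 h0)).fun_add
    (hasDerivAt_mul_log_add ((9 * lam - 172) / 24) 1 h1) |>.fun_add
    (hasDerivAt_mul_log_add ((37 - 2 * lam) / 6) 2 h2)
  refine (hderiv.congr_of_eventuallyEq (.of_forall fun y => ?_)).congr_deriv ?_
  · simp only [elementaryPart, add_zero, pow_one]
  · simp only [elementaryPartDeriv, add_zero]
    norm_num
    ring

theorem hasDerivAt_G (hx : 0 < x) : HasDerivAt (G lam) (derivG lam x) x := by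
  have h0 : x + 0 ≠ 0 := by positivity
  have h1 : x + 1 ≠ 0 := by positivity
  have h2 : x + 2 ≠ 0 := by positivity
  have hlin (a b : ℝ) : HasDerivAt (fun y => a * y + b) a x := by
    simpa using ((hasDerivAt_id' x).const_mul a).add_const b
  have hH := (((hlin (-lam) 24).fun_mul (hasDerivAt_mul_log_add 1 0 h0)).fun_add
    ((hlin (9 * lam - 172) (12 * lam - 256)).fun_mul (hasDerivAt_mul_log_add 1 1 h1))).fun_add
    ((hlin (37 - 2 * lam) (-3 * lam + 61)).fun_mul (hasDerivAt_mul_log_add 4 2 h2))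
  have hderiv := ((((hasDerivAt_log_Gamma hx).fun_add (hasDerivAt_id' x)).fun_add
    (hasDerivAt_div_add_pow (1 / 12) 1 2 h1)).fun_add
    (hasDerivAt_div_add_pow ((lam - 48) / 48) 1 1 h1)).fun_add (hH.div_const 24)
  refine (hderiv.congr_of_eventuallyEq (.of_forall fun y => ?_)).congr_deriv ?_
  · simp only [G, H, Function.comp_apply, add_zero, add_comm 1 y, div_div, pow_one]
    ring
  · simp only [derivG, elementaryPart, add_zero]
    norm_num
    field_simp
    ring

theorem hasDerivAt_derivG_sub_add_one (hx : 0 < x) :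
    HasDerivAt (fun y => derivG lam y - derivG lam (y + 1))
      (1 / x ^ 2 + (elementaryPartDeriv lam x - elementaryPartDeriv lam (x + 1))) x := by
  have hinv : HasDerivAt (fun y => -1 / y) (1 / x ^ 2) x := by
    simpa using hasDerivAt_div_add_pow (-1) 0 1 (x := x) (by simpa using hx.ne')
  have hshift := (hasDerivAt_elementaryPart lam (x := x + 1) (by positivity)).comp_add_const x 1
  refine (hinv.fun_add ((hasDerivAt_elementaryPart lam hx).fun_sub hshift)).congr_of_eventuallyEq ?_
  filter_upwards [lt_mem_nhds hx] with y hy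
  rw [derivG, derivG, digamma_add_one hy]
  ring

theorem tendsto_derivG : Tendsto (derivG lam) atTop (𝓝 0) := by
  have hinv (d : ℝ) : Tendsto (fun x : ℝ => (x + d)⁻¹) atTop (𝓝 0) :=
    tendsto_inv_atTop_zero.comp (tendsto_atTop_add_const_right _ d tendsto_id)
  have hlim := tendsto_digamma_sub_log.add <|
    ((hinv 0).sub (((hinv 1).pow 3).const_mul (1 / 6))).sub
      (((hinv 1).pow 2).const_mul ((lam - 48) / 48)) |>.add
    ((hinv 1).const_mul ((lam - 28) / 8)) |>.add
    ((hinv 2).const_mul ((lam - 13) / 6)) |>.add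
    ((tendsto_log_comp_add_sub_log 1).const_mul ((9 * lam - 172) / 24)) |>.add
    ((tendsto_log_comp_add_sub_log 2).const_mul ((37 - 2 * lam) / 6))
  convert hlim using 1
  · ext x
    simp only [derivG, elementaryPart, add_zero, div_eq_mul_inv, inv_pow]
    ring
  · norm_num

end Derivative

section Necessity

variable {lam x : ℝ}

theorem elementaryPartDeriv_sub_add_one_eq (hx : 0 < x) :
    1 / x ^ 2 + (elementaryPartDeriv lam x - elementaryPartDeriv lam (x + 1)) =
      ((80 - 20 * lam) * x ^ 6 + (536 - 175 * lam) * x ^ 5 + (1376 - 623 * lam) * x ^ 4 +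
        (1676 - 1155 * lam) * x ^ 3 + (1016 - 1181 * lam) * x ^ 2 + (308 - 638 * lam) * x -
        144 * lam) / (24 * x * (x + 1) ^ 4 * (x + 2) ^ 4 * (x + 3) ^ 2) := by
  rw [elementaryPartDeriv, elementaryPartDeriv, show x + 1 + 1 = x + 2 by ring,
    show x + 1 + 2 = x + 3 by ring]
  field_simp
  ring

theorem eventually_elementaryPartDeriv_sub_add_one_pos (hlam : lam < 4) :
    ∀ᶠ x in atTop,
      0 < 1 / x ^ 2 + (elementaryPartDeriv lam x - elementaryPartDeriv lam (x + 1)) := by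
  -- The numerator divided by `x ^ 6`, as a polynomial in `y = 1 / x`.
  set q : ℝ → ℝ := fun y => 80 - 20 * lam + (536 - 175 * lam) * y + (1376 - 623 * lam) * y ^ 2 +
    (1676 - 1155 * lam) * y ^ 3 + (1016 - 1181 * lam) * y ^ 4 + (308 - 638 * lam) * y ^ 5 -
    144 * lam * y ^ 6 with hq
  have hlim : Tendsto (fun x : ℝ => q x⁻¹) atTop (𝓝 (q 0)) :=
    ((by fun_prop : Continuous q).tendsto 0).comp tendsto_inv_atTop_zero
  have hq0 : 0 < q 0 := by
    norm_num [hq]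
    linarith
  filter_upwards [hlim.eventually_const_lt hq0, eventually_gt_atTop 0] with x hqx hx
  have hfactor : 1 / x ^ 2 + (elementaryPartDeriv lam x - elementaryPartDeriv lam (x + 1)) =
      x ^ 6 * q x⁻¹ / (24 * x * (x + 1) ^ 4 * (x + 2) ^ 4 * (x + 3) ^ 2) := by
    rw [elementaryPartDeriv_sub_add_one_eq hx, hq]
    congr 1
    field_simp
  rw [hfactor]
  positivity

theorem exists_derivG_nonpos (hlam : lam < 4) : ∃ x, 0 < x ∧ derivG lam x ≤ 0 := by
  obtain ⟨X, hX⟩ := eventually_atTop.1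
    ((eventually_elementaryPartDeriv_sub_add_one_pos hlam).and (eventually_gt_atTop 0))
  refine ⟨X + 1, by linarith [(hX X le_rfl).2], ?_⟩
  exact le_of_hasDerivAt_sub_shift_le (g := 0) (g' := 0) one_pos (tendsto_derivG lam)
    tendsto_const_nhds (fun y hy => hasDerivAt_derivG_sub_add_one lam (hX y hy.le).2)
    (fun y _ => by simpa using hasDerivAt_const y (0 : ℝ)) (fun y hy => (hX y hy.le).1.le)
    (lt_add_one X)

end Necessity

section Sufficiency

/-- The density with Laplace transform `elementaryPartDeriv lam` on `(0, ∞)`. -/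
noncomputable def elementaryDensity (lam t : ℝ) : ℝ :=
  -t + t ^ 3 * exp (-t) / 12 + (lam - 48) / 48 * t ^ 2 * exp (-t) -
    (lam - 28) / 8 * t * exp (-t) - (lam - 13) / 6 * t * exp (-t) ^ 2 - lam / 24 +
    (9 * lam - 172) / 24 * exp (-t) + (37 - 2 * lam) / 6 * exp (-t) ^ 2

/-- The density with Laplace transform `derivG lam` on `(0, ∞)` when `4 ≤ lam`. The summand
`1 / (1 - exp (-t))` comes from `ψ'(x) = ∫₀^∞ t / (1 - e^{-t}) e^{-xt} dt`. -/
noncomputable def derivGDensity (lam t : ℝ) : ℝ :=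
  -(1 / (1 - exp (-t)) + elementaryDensity lam t / t)

theorem measurable_derivGDensity (lam : ℝ) : Measurable (derivGDensity lam) := by
  unfold derivGDensity elementaryDensity
  fun_prop

theorem hasLaplaceAt_elementaryDensity (lam : ℝ) {x : ℝ} (hx : 0 < x) :
    HasLaplaceAt (elementaryDensity lam) (elementaryPartDeriv lam x) x := by
  have hterm (c : ℝ) (m j : ℕ) : HasLaplaceAt (fun t => c * (t ^ m * exp (-t) ^ j))
      (c * (m.factorial / (x + j) ^ (m + 1))) x :=
    ((hasLaplaceAt_pow m (by positivity)).mul_exp_neg_pow j).const_mul c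
  have hsum := (hterm (-1) 1 0).add (hterm (1 / 12) 3 1) |>.add (hterm ((lam - 48) / 48) 2 1)
    |>.sub (hterm ((lam - 28) / 8) 1 1) |>.sub (hterm ((lam - 13) / 6) 1 2)
    |>.sub (hterm (lam / 24) 0 0) |>.add (hterm ((9 * lam - 172) / 24) 0 1)
    |>.add (hterm ((37 - 2 * lam) / 6) 0 2)
  convert hsum using 1
  · ext t
    simp only [elementaryDensity]
    ring
  · simp only [elementaryPartDeriv]
    norm_num [Nat.factorial]
    ring

theorem integral_neg_mul_mul_exp_mul_derivGDensity (lam : ℝ) {x : ℝ} (hx : 0 < x) :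
    ∫ t in Ioi 0, -t * (1 - exp (-t)) * exp (x * -t) * derivGDensity lam t =
      1 / x ^ 2 + (elementaryPartDeriv lam x - elementaryPartDeriv lam (x + 1)) := by
  have hφ := hasLaplaceAt_elementaryDensity lam hx
  have hφ1 := hasLaplaceAt_elementaryDensity lam (x := x + 1) (by positivity)
  have hsum := (hasLaplaceAt_pow 1 hx).add (hφ.sub hφ1.mul_exp_neg)
  simp only [pow_one, Nat.factorial_one, Nat.cast_one, Nat.reduceAdd] at hsum
  rw [← hsum.2]
  refine setIntegral_congr_fun measurableSet_Ioi fun t ht => ?_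
  have ht0 : t ≠ 0 := ne_of_gt ht
  have hexp : 1 - exp (-t) ≠ 0 := (sub_pos.2 (by simpa using ht)).ne'
  simp only [derivGDensity, mul_neg]
  field_simp

variable {lam t : ℝ}

theorem derivGDensity_pos (hlam : 4 ≤ lam) (ht : 0 < t) : 0 < derivGDensity lam t := by
  have hE : 0 < exp t - 1 := sub_pos.2 (one_lt_exp_iff.2 ht)
  have hQ := exp_polynomial_degree_two_pos ht
  have hR := exp_polynomial_degree_three_pos ht
  have hdecomp : derivGDensity lam t =
      ((lam - 4) * (exp t ^ 2 - (9 - 3 * t + t ^ 2 / 2) * exp t + (8 + 4 * t)) * (exp t - 1) +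
        (4 * exp t ^ 3 + (132 - 96 * t + 22 * t ^ 2 - 2 * t ^ 3) * exp t ^ 2 -
          (252 - 36 * t + 22 * t ^ 2 - 2 * t ^ 3) * exp t + (116 + 36 * t))) /
      (24 * t * exp t ^ 2 * (exp t - 1)) := by
    have hinv : 1 / (1 - (exp t)⁻¹) = exp t / (exp t - 1) := by
      field_simp
    rw [derivGDensity, elementaryDensity, exp_neg, hinv]
    field_simp
    ring
  rw [hdecomp]
  have : 0 ≤ lam - 4 := sub_nonneg.2 hlam
  positivity

theorem derivGDensity_le (hlam : 0 ≤ lam) (ht : 0 < t) : derivGDensity lam t ≤ lam + 7 + t := by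
  have hexp_pos : 0 < exp (-t) := exp_pos _
  have hexp_lt_one : exp (-t) < 1 := by simpa using ht
  have hone_sub_exp_le : 1 - exp (-t) ≤ t := by linarith [add_one_le_exp (-t)]
  have hsingular : t + exp (-t) ≤ t / (1 - exp (-t)) := by
    rw [le_div_iff₀ (by linarith)]
    nlinarith
  have helementary : -elementaryDensity lam t ≤ t + exp (-t) + t * (lam + 7 + t) := by
    rw [elementaryDensity]
    generalize exp (-t) = a at *
    have hquad : lam * ((1 - a) * (1 - 8 * a)) ≤ lam * t := by
      gcongr
      nlinarith
    have hmul_a : lam * (t * a) ≤ lam * t := by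
      gcongr
      nlinarith
    have hmul_a_sq : lam * (t * a ^ 2) ≤ lam * t := by
      gcongr
      nlinarith [mul_lt_one_of_nonneg_of_lt_one_left hexp_pos.le hexp_lt_one hexp_lt_one.le]
    have hsq_mul_a : t ^ 2 * a ≤ t ^ 2 := by nlinarith
    have hone_sub_mul_a : a * (1 - a) ≤ t := by nlinarith
    have hnonneg : 0 ≤ 2 * (t ^ 3 * a) + lam * (t ^ 2 * a) / 2 + 84 * (t * a) +
        52 * (t * a ^ 2) + 16 * (lam * t) := by positivity
    linarith
  calc derivGDensity lam t = (-elementaryDensity lam t - t / (1 - exp (-t))) / t := by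
        rw [derivGDensity]
        field_simp
        ring
    _ ≤ t * (lam + 7 + t) / t := by
        gcongr
        linarith
    _ = lam + 7 + t := by field_simp

theorem integrable_exp_halfLineMeasure_derivGDensity (hlam : 4 ≤ lam) (x : ℝ) (hx : 0 < x) :
    Integrable (fun t => exp (x * -t)) (halfLineMeasure (derivGDensity lam)) := by
  rw [integrable_halfLineMeasure_iff (measurable_derivGDensity lam)
    fun t ht => (derivGDensity_pos hlam ht).le]
  have hbound : IntegrableOn (fun t => (lam + 7 + t) * exp (-(x * t))) (Ioi 0) := by
    simpa using (((hasLaplaceAt_pow 0 hx).const_mul (lam + 7)).add (hasLaplaceAt_pow 1 hx)).1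
  refine hbound.mono' ((by fun_prop : Measurable fun t => exp (x * -t)).mul
    (measurable_derivGDensity lam)).aestronglyMeasurable ?_
  filter_upwards [ae_restrict_mem measurableSet_Ioi] with t ht
  have hpos := derivGDensity_pos hlam ht
  rw [norm_of_nonneg (by positivity), mul_neg, mul_comm]
  gcongr
  exact derivGDensity_le (by linarith) ht

theorem derivG_eq_laplace (hlam : 4 ≤ lam) {x : ℝ} (hx : 0 < x) :
    derivG lam x = laplace (halfLineMeasure (derivGDensity lam)) x := by
  have hexp := integrable_exp_halfLineMeasure_derivGDensity hlam
  have hlim := tendsto_laplace_atTop hexp (ae_halfLineMeasure_pos _)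
  have hderiv (y : ℝ) (hy : 0 < y) := hasDerivAt_derivG_sub_add_one lam hy
  have hderiv' (y : ℝ) (hy : 0 < y) := hasDerivAt_laplace_sub_add_one hexp hy
  have heq (y : ℝ) (hy : 0 < y) :=
    (integral_halfLineMeasure (measurable_derivGDensity lam)
      (fun t ht => (derivGDensity_pos hlam ht).le) _).trans
      (integral_neg_mul_mul_exp_mul_derivGDensity lam hy)
  exact le_antisymm
    (le_of_hasDerivAt_sub_shift_le one_pos (tendsto_derivG lam) hlim hderiv hderiv'
      (fun y hy => (heq y hy).le) hx)
    (le_of_hasDerivAt_sub_shift_le one_pos hlim (tendsto_derivG lam) hderiv' hderiv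
      (fun y hy => (heq y hy).ge) hx)

end Sufficiency

theorem derivWithin_G_eqOn (lam : ℝ) : EqOn (derivWithin (G lam) (Ioi 0)) (derivG lam) (Ioi 0) :=
  fun _ hx => (hasDerivAt_G lam hx).hasDerivWithinAt.derivWithin
    (isOpen_Ioi.uniqueDiffWithinAt hx)

theorem stmt_9 (lam : ℝ) :
    (∀ k : ℕ, 1 ≤ k → ∀ x ∈ Set.Ioi (0 : ℝ),
      0 < (-1 : ℝ) ^ (k + 1) * iteratedDerivWithin k (G lam) (Set.Ioi 0) x) ↔
    4 ≤ lam := by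
  constructor
  · intro h
    by_contra! hlam
    obtain ⟨x, hx, hnonpos⟩ := exists_derivG_nonpos hlam
    have hpos := h 1 le_rfl x hx
    rw [iteratedDerivWithin_one, derivWithin_G_eqOn lam hx] at hpos
    exact hnonpos.not_gt (by simpa using hpos)
  · intro hlam k hk x hx
    obtain ⟨n, rfl⟩ := Nat.exists_eq_add_of_le' hk
    have hlaplace : EqOn (derivWithin (G lam) (Ioi 0))
        (laplace (halfLineMeasure (derivGDensity lam))) (Ioi 0) :=
      (derivWithin_G_eqOn lam).trans fun _ hy => derivG_eq_laplace hlam hy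
    rw [iteratedDerivWithin_succ', iteratedDerivWithin_congr hlaplace hx,
      iteratedDerivWithin_of_isOpen isOpen_Ioi hx, pow_add, pow_add]
    simpa using neg_one_pow_mul_iteratedDeriv_laplace_pos
      (integrable_exp_halfLineMeasure_derivGDensity hlam) (ae_halfLineMeasure_pos _)
      (halfLineMeasure_ne_zero (measurable_derivGDensity lam)
        fun t ht => derivGDensity_pos hlam ht) n hx
end

section
/- The function θ(t) = 2e^{5t}(t³ − 15t² + 78t − 140) + e^{4t}(t⁴ − 16t³ + 132t² − 420t + 1236) − 2e^{3t}(5t⁴ − 26t³ + 125t² − 132t + 1018) + e^{2t}(17t⁴ − 88t³ + 356t² − 228t + 1660) − e^t(8t⁴ − 38t³ + 40t² − 228t + 756) + 176 is strictly positive for all t ∈ (0,∞). -/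
/-!
An exponential polynomial `∑ i, exp (k i * t) * ∑ j, A i j * t ^ j` has the Taylor coefficients
`∑ i, ∑ j, A i j * n.descFactorial j * k i ^ (n - j)` at the origin, so it is positive on `(0, ∞)`
as soon as these are nonnegative and not all zero. For `θ` they are integers. From `n = 27` on,
the coefficient of `5 ^ n` is nonnegative and the terms in `4 ^ n` and `2 ^ n` outweigh the
negative ones in `3 ^ n` and `1 ^ n`; the finitely many smaller `n` are checked by evaluation, the
first nonzero coefficient being that of index `8`.
-/

open scoped Nat

section ExpPoly

variable {ι R S 𝕂 : Type*} [Fintype ι] [NormedField 𝕂] [NormedAlgebra ℚ 𝕂] {d : ℕ}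

/-- The exponential polynomial in `t` whose frequencies are the `k i` and in which `exp (k i * t)`
is multiplied by the polynomial of degree less than `d` with coefficient vector `A i`. -/
noncomputable def expPoly (k : ι → 𝕂) (A : Matrix ι (Fin d) 𝕂) (t : 𝕂) : 𝕂 :=
  ∑ i, NormedSpace.exp (k i * t) * ∑ j, A i j * t ^ (j : ℕ)

/-- The `n`-th derivative at `0` of `expPoly k A`, as an algebraic expression that makes sense in
any commutative semiring. The truncated exponent `n - j` is harmless, since
`n.descFactorial j = 0` for `n < j`. -/
def expPolyCoeff [CommSemiring R] (k : ι → R) (A : Matrix ι (Fin d) R) (n : ℕ) : R :=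
  ∑ i, ∑ j, A i j * (n.descFactorial j * k i ^ (n - j))

lemma map_expPolyCoeff [CommSemiring R] [CommSemiring S] (f : R →+* S) (k : ι → R)
    (A : Matrix ι (Fin d) R) (n : ℕ) :
    f (expPolyCoeff k A n) = expPolyCoeff (f ∘ k) (A.map f) n := by
  simp [expPolyCoeff]

lemma hasSum_exp_mul_pow [CompleteSpace 𝕂] (k t : 𝕂) (j : ℕ) :
    HasSum (fun n : ℕ ↦ n.descFactorial j * k ^ (n - j) * (t ^ n / n !))
      (NormedSpace.exp (k * t) * t ^ j) := by
  have : CharZero 𝕂 := algebraRat.charZero 𝕂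
  have initial_terms_eq_zero :
      ∑ n ∈ Finset.range j, n.descFactorial j * k ^ (n - j) * (t ^ n / n !) = 0 :=
    Finset.sum_eq_zero fun n hn ↦ by
      simp [Nat.descFactorial_of_lt (Finset.mem_range.mp hn)]
  rw [← hasSum_nat_add_iff' j, initial_terms_eq_zero, sub_zero]
  refine ((NormedSpace.expSeries_div_hasSum_exp (k * t)).mul_right (t ^ j)).congr_fun fun n ↦ ?_
  have factorial_eq : ((n + j)! : 𝕂) = n ! * (n + j).descFactorial j := by
    exact_mod_cast (Nat.add_sub_cancel n j ▸
      Nat.factorial_mul_descFactorial (Nat.le_add_left j n)).symm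
  have descFactorial_ne_zero : ((n + j).descFactorial j : 𝕂) ≠ 0 := by
    exact_mod_cast (Nat.descFactorial_pos.mpr (Nat.le_add_left j n)).ne'
  have factorial_ne_zero : (n ! : 𝕂) ≠ 0 := by exact_mod_cast n.factorial_ne_zero
  rw [factorial_eq, Nat.add_sub_cancel]
  field_simp
  ring

theorem hasSum_expPoly [CompleteSpace 𝕂] (k : ι → 𝕂) (A : Matrix ι (Fin d) 𝕂) (t : 𝕂) :
    HasSum (fun n : ℕ ↦ expPolyCoeff k A n * (t ^ n / n !)) (expPoly k A t) := by
  simp only [expPoly, expPolyCoeff, Finset.sum_mul, Finset.mul_sum]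
  refine hasSum_sum fun i _ ↦ hasSum_sum fun j _ ↦ ?_
  rw [mul_left_comm]
  simpa only [mul_assoc] using (hasSum_exp_mul_pow (k i) t j).mul_left (A i j)

theorem expPoly_pos {k : ι → ℝ} {A : Matrix ι (Fin d) ℝ} {t : ℝ} (ht : 0 < t)
    (hnonneg : ∀ n, 0 ≤ expPolyCoeff k A n) {m : ℕ} (hpos : 0 < expPolyCoeff k A m) :
    0 < expPoly k A t :=
  hasSum_lt (fun n ↦ mul_nonneg (hnonneg n) (by positivity)) (mul_pos hpos (by positivity))
    hasSum_zero (hasSum_expPoly k A t)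

end ExpPoly

lemma pow_add_mul_le_pow_add_mul {K : Type*} [CommSemiring K] [PartialOrder K]
    [IsOrderedRing K] {a b c p q : K} {s : ℕ} (ha : 0 ≤ a) (hab : a ≤ b) (hq : 0 ≤ q)
    (hpow : c * a ^ s ≤ b ^ s) (hpq : p ≤ c * q) (m : ℕ) :
    a ^ (m + s) * p ≤ b ^ (m + s) * q := by
  have hb : 0 ≤ b := ha.trans hab
  calc
    a ^ (m + s) * p ≤ a ^ (m + s) * (c * q) := by gcongr
    _ = a ^ m * (c * a ^ s) * q := by ring
    _ ≤ a ^ m * b ^ s * q := by gcongr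
    _ ≤ b ^ m * b ^ s * q := by gcongr
    _ = b ^ (m + s) * q := by rw [pow_add]

/-- The coefficients of `θ`: the entry in row `i` and column `j` is that of `exp (i * t) * t ^ j`,
both indices starting at `0`. They are integers so that Taylor coefficients can be evaluated. -/
def thetaMatrix : Matrix (Fin 6) (Fin 5) ℤ :=
  !![ 176,    0,    0,   0,   0;
     -756,  228,  -40,  38,  -8;
     1660, -228,  356, -88,  17;
    -2036,  264, -250,  52, -10;
     1236, -420,  132, -16,   1;
     -280,  156,  -30,   2,   0]

/-- The `n`-th derivative of `θ` at `0`. -/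
def thetaCoeff (n : ℕ) : ℤ :=
  expPolyCoeff (fun i : Fin 6 ↦ (i : ℤ)) thetaMatrix n

-- `27` is the least shift for which each of the five polynomials in `m` has coefficients of
-- constant sign; the exponent is `4` less so that these coefficients are integers.
lemma thetaCoeff_add_twentySeven (m : ℕ) :
    thetaCoeff (m + 27) =
      5 ^ (m + 23) * (10 * m ^ 3 + 30 * m ^ 2 + 20 * m + 500) +
      4 ^ (m + 23) * (m ^ 4 + 38 * m ^ 3 + 1019 * m ^ 2 + 21526 * m + 371280) -
      3 ^ (m + 23) * (10 * m ^ 4 + 864 * m ^ 3 + 29072 * m ^ 2 + 457890 * m + 3026160) +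
      2 ^ (m + 23) * (17 * m ^ 4 + 1558 * m ^ 3 + 53979 * m ^ 2 + 842262 * m + 5048560) -
      (8 * m ^ 4 + 778 * m ^ 3 + 28268 * m ^ 2 + 454450 * m + 2725380) := by
  simp only [thetaCoeff, expPolyCoeff, thetaMatrix, Fin.sum_univ_six, Fin.sum_univ_five,
    Matrix.of_apply, Matrix.cons_val, Fin.coe_ofNat_eq_mod, Nat.reduceMod, Nat.descFactorial_succ,
    Nat.descFactorial_zero, Nat.reduceSubDiff, tsub_zero, Nat.cast_mul, Nat.cast_add,
    Nat.cast_ofNat, Nat.cast_one]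
  ring

lemma three_pow_term_le_four_pow_term (m : ℕ) :
    (3 ^ (m + 23) * (10 * m ^ 4 + 864 * m ^ 3 + 29072 * m ^ 2 + 457890 * m + 3026160) : ℤ) ≤
      4 ^ (m + 23) * (m ^ 4 + 38 * m ^ 3 + 1019 * m ^ 2 + 21526 * m + 371280) :=
  pow_add_mul_le_pow_add_mul (c := 30) (by norm_num) (by norm_num) (by positivity) (by norm_num)
    (by ring_nf; gcongr <;> norm_num) m

lemma one_pow_term_le_two_pow_term (m : ℕ) :
    (8 * m ^ 4 + 778 * m ^ 3 + 28268 * m ^ 2 + 454450 * m + 2725380 : ℤ) ≤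
      2 ^ (m + 23) * (17 * m ^ 4 + 1558 * m ^ 3 + 53979 * m ^ 2 + 842262 * m + 5048560) :=
  calc
    (8 * m ^ 4 + 778 * m ^ 3 + 28268 * m ^ 2 + 454450 * m + 2725380 : ℤ)
      ≤ 17 * m ^ 4 + 1558 * m ^ 3 + 53979 * m ^ 2 + 842262 * m + 5048560 := by
        gcongr <;> norm_num
    _ ≤ 2 ^ (m + 23) * (17 * m ^ 4 + 1558 * m ^ 3 + 53979 * m ^ 2 + 842262 * m + 5048560) :=
        le_mul_of_one_le_left (by positivity) (one_le_pow₀ one_le_two)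

lemma thetaCoeff_add_twentySeven_nonneg (m : ℕ) : 0 ≤ thetaCoeff (m + 27) := by
  have five_pow_term_nonneg :
      (0 : ℤ) ≤ 5 ^ (m + 23) * (10 * m ^ 3 + 30 * m ^ 2 + 20 * m + 500) := by positivity
  rw [thetaCoeff_add_twentySeven]
  linarith [three_pow_term_le_four_pow_term m, one_pow_term_le_two_pow_term m]

lemma thetaCoeff_nonneg_of_lt_twentySeven : ∀ n < 27, 0 ≤ thetaCoeff n := by
  decide

lemma thetaCoeff_nonneg (n : ℕ) : 0 ≤ thetaCoeff n := by
  rcases lt_or_ge n 27 with hn | hn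
  · exact thetaCoeff_nonneg_of_lt_twentySeven n hn
  · exact Nat.sub_add_cancel hn ▸ thetaCoeff_add_twentySeven_nonneg (n - 27)

lemma thetaCoeff_eight_pos : 0 < thetaCoeff 8 := by
  decide

lemma expPolyCoeff_thetaMatrix (n : ℕ) :
    expPolyCoeff (fun i : Fin 6 ↦ ((i : ℤ) : ℝ)) (thetaMatrix.map (↑)) n = thetaCoeff n :=
  (map_expPolyCoeff (Int.castRingHom ℝ) _ thetaMatrix n).symm

theorem stmt_16 (t : ℝ) (ht : t ∈ Set.Ioi (0 : ℝ)) :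
    0 < 2 * Real.exp (5 * t) * (t ^ 3 - 15 * t ^ 2 + 78 * t - 140) +
        Real.exp (4 * t) * (t ^ 4 - 16 * t ^ 3 + 132 * t ^ 2 - 420 * t + 1236) -
        2 * Real.exp (3 * t) *
          (5 * t ^ 4 - 26 * t ^ 3 + 125 * t ^ 2 - 132 * t + 1018) +
        Real.exp (2 * t) *
          (17 * t ^ 4 - 88 * t ^ 3 + 356 * t ^ 2 - 228 * t + 1660) -
        Real.exp t * (8 * t ^ 4 - 38 * t ^ 3 + 40 * t ^ 2 - 228 * t + 756) +
        176 := by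
  have theta_pos : 0 < expPoly (fun i : Fin 6 ↦ ((i : ℤ) : ℝ)) (thetaMatrix.map (↑)) t := by
    refine expPoly_pos ht (fun n ↦ ?_) (m := 8) ?_ <;> rw [expPolyCoeff_thetaMatrix]
    · exact_mod_cast thetaCoeff_nonneg n
    · exact_mod_cast thetaCoeff_eight_pos
  convert theta_pos using 1
  simp only [expPoly, ← Real.exp_eq_exp_ℝ, thetaMatrix, Fin.sum_univ_six, Fin.sum_univ_five,
    Matrix.map_apply, Matrix.of_apply, Matrix.cons_val, Fin.coe_ofNat_eq_mod, Nat.reduceMod,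
    Nat.cast_ofNat, Nat.cast_zero, Nat.cast_one, Int.cast_ofNat, Int.cast_zero, Int.cast_one,
    Int.cast_neg, zero_mul, one_mul, Real.exp_zero]
  ring
end
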